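/- There is an absolute constant C such that every convex polygon in ℝ² all of whose vertices are points of ℤ² and whose perimeter is L has at most C L^{2/3} vertices. -/

import Mathlib

/-!
Each vertex of the polygon is the strict maximiser of a linear functional. Sort the vertices into
four classes by the signs of the two coefficients of that functional. After reflecting the
coordinate axes, the functionals of one class are monotone, so the class is an antichain: a chain of
points going right and down, which moreover turns strictly clockwise. Its steps are therefore
pairwise distinct lattice vectors, and their `ℓ¹`-lengths telescope to the `ℓ¹`-distance of the two
ends, which is at most twice the perimeter `L`. At most `(2 * r + 1) ^ 2` of the steps can have
length at most `r`, and at most `2 * L / r` can be longer; `r ≈ L ^ (1 / 3)` gives the bound.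

The perimeter dominates all distances within the polygon because a functional of norm one attains
each of its values on the frontier. As perimeter is measured by `ENNReal.toReal`, which sends `⊤`
to `0`, one also needs it to be finite: by Carathéodory's theorem, the frontier of the convex hull
of a finite planar set is covered by the segments between its points.
-/

open MeasureTheory Set

noncomputable section

abbrev E2 := EuclideanSpace ℝ (Fin 2)

/-- The embedding of an integer vector into the Euclidean plane. -/
def ek (k : Fin 2 → ℤ) : E2 := (WithLp.equiv 2 (Fin 2 → ℝ)).symm fun i => (k i : ℝ)

section LatticeVectors

variable {ι : Type*}

theorem card_Icc_neg_natCast [Fintype ι] [DecidableEq ι] (r : ℕ) :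
    (Finset.Icc (fun _ : ι => -(r : ℤ)) fun _ => (r : ℤ)).card = (2 * r + 1) ^ Fintype.card ι := by
  rw [Pi.card_Icc, Finset.prod_const, Finset.card_univ, Int.card_Icc]
  congr 1
  omega

theorem card_le_pow_add_div_of_sum_abs_le [Fintype ι] (D : Finset (ι → ℤ)) {M : ℝ}
    (hD : ((∑ d ∈ D, ∑ i, |d i| : ℤ) : ℝ) ≤ M) {r : ℕ} (hr : 0 < r) :
    (D.card : ℝ) ≤ (2 * r + 1) ^ Fintype.card ι + M / r := by
  classical
  set short := D.filter fun d => ∑ i, |d i| ≤ (r : ℤ) with short_def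
  set long := D.filter fun d => ¬ ∑ i, |d i| ≤ (r : ℤ) with long_def
  have short_le : short.card ≤ (2 * r + 1) ^ Fintype.card ι := by
    rw [← card_Icc_neg_natCast]
    refine Finset.card_le_card fun d hd => ?_
    have abs_le_r (i : ι) : |d i| ≤ r :=
      (Finset.single_le_sum (fun j _ => abs_nonneg (d j)) (Finset.mem_univ i)).trans
        (Finset.mem_filter.1 hd).2
    exact Finset.mem_Icc.2 ⟨fun i => (abs_le.1 (abs_le_r i)).1, fun i => (abs_le.1 (abs_le_r i)).2⟩
  have long_mul_le : (long.card : ℤ) * r ≤ ∑ d ∈ D, ∑ i, |d i| :=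
    calc (long.card : ℤ) * r = ∑ _d ∈ long, (r : ℤ) := by simp
      _ ≤ ∑ d ∈ long, ∑ i, |d i| :=
        Finset.sum_le_sum fun d hd => (not_le.1 (Finset.mem_filter.1 hd).2).le
      _ ≤ ∑ d ∈ D, ∑ i, |d i| :=
        Finset.sum_le_sum_of_subset_of_nonneg (Finset.filter_subset _ _) fun d _ _ =>
          Finset.sum_nonneg fun i _ => abs_nonneg (d i)
  have long_le : (long.card : ℝ) ≤ M / r := by
    rw [le_div_iff₀ (by exact_mod_cast hr)]
    exact le_trans (by exact_mod_cast long_mul_le) hD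
  have short_add_long : (D.card : ℝ) = short.card + long.card := by
    rw [short_def, long_def]
    exact_mod_cast (Finset.card_filter_add_card_filter_not _).symm
  rw [short_add_long]
  exact add_le_add (by exact_mod_cast short_le) long_le

theorem card_le_mul_rpow_of_sum_abs_le [Fintype ι] (D : Finset (ι → ℤ)) {M : ℝ} (hM : 1 ≤ M)
    (hD : ((∑ d ∈ D, ∑ i, |d i| : ℤ) : ℝ) ≤ M) :
    (D.card : ℝ) ≤ (5 ^ Fintype.card ι + 1) *
      M ^ ((Fintype.card ι : ℝ) / (Fintype.card ι + 1)) := by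
  set n := Fintype.card ι
  have M_nonneg : 0 ≤ M := zero_le_one.trans hM
  -- The radius `r ≈ c` balances the two terms `(2 * r + 1) ^ n` and `M / r`.
  set c : ℝ := M ^ ((1 : ℝ) / (n + 1)) with c_def
  have one_le_c : 1 ≤ c := Real.one_le_rpow hM (by positivity)
  have c_pow : c ^ (n + 1) = M := by
    rw [c_def, one_div, ← Nat.cast_succ, Real.rpow_inv_natCast_pow M_nonneg n.succ_ne_zero]
  have c_pow_eq_rpow : c ^ n = M ^ ((n : ℝ) / (n + 1)) := by
    rw [c_def, ← Real.rpow_natCast, ← Real.rpow_mul M_nonneg, one_div_mul_eq_div]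
  have ceil_le : (⌈c⌉₊ : ℝ) ≤ 2 * c := by
    linarith [Nat.ceil_lt_add_one (zero_le_one.trans one_le_c)]
  calc (D.card : ℝ) ≤ (2 * ⌈c⌉₊ + 1) ^ n + M / ⌈c⌉₊ :=
        card_le_pow_add_div_of_sum_abs_le D hD (Nat.ceil_pos.2 (by linarith))
    _ ≤ (5 * c) ^ n + M / c := by
        gcongr
        · linarith
        · exact Nat.le_ceil c
    _ = (5 ^ n + 1) * c ^ n := by
        rw [← c_pow, pow_succ, mul_div_assoc, div_self (by positivity), mul_pow]
        ring
    _ = _ := by rw [c_pow_eq_rpow]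

theorem exists_monotone_units_smul [Finite ι] (f : (ι → ℤ) →+ ℝ) :
    ∃ ε : ι → ℤˣ, Monotone fun v : ι → ℤ => f (ε • v) := by
  classical
  cases nonempty_fintype ι
  have eq_sum (v : ι → ℤ) : f v = ∑ i, v i * f (Pi.single i 1) := by
    conv_lhs => rw [← Finset.univ_sum_single v, map_sum]
    refine Finset.sum_congr rfl fun i _ => ?_
    rw [← zsmul_eq_mul, ← map_zsmul, ← Pi.single_smul, smul_eq_mul, mul_one]
  refine ⟨fun i => if 0 ≤ f (Pi.single i 1) then 1 else -1, fun v w hvw => ?_⟩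
  change f _ ≤ f _
  rw [eq_sum, eq_sum]
  refine Finset.sum_le_sum fun i _ => ?_
  have coord_le : (v i : ℝ) ≤ w i := by exact_mod_cast hvw i
  rw [Pi.smul_apply', Pi.smul_apply']
  split_ifs with coeff_nonneg
  · simpa using mul_le_mul_of_nonneg_right coord_le coeff_nonneg
  · simpa using mul_le_mul_of_nonpos_right coord_le (not_le.1 coeff_nonneg).le

theorem abs_units_smul_apply (ε : ι → ℤˣ) (v : ι → ℤ) (i : ι) :
    |(ε • v) i| = |v i| := by
  rcases Int.units_eq_one_or (ε i) with h | h <;> simp [Pi.smul_apply', h]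

end LatticeVectors

section Sequences

theorem exists_fin_enum_strictMono {α β : Type*} [LinearOrder β] {Q : Finset α} {g : α → β}
    (hg : InjOn g Q) {n : ℕ} (hn : Q.card = n) :
    ∃ u : Fin n → α, (∀ i, u i ∈ Q) ∧ StrictMono (g ∘ u) := by
  let e : Fin n ≃ Q := (Q.equivFinOfCardEq hn).symm
  let σ := Tuple.sort fun i => g (e i)
  refine ⟨fun i => e (σ i), fun i => (e (σ i)).2,
    (Tuple.monotone_sort fun i => g (e i)).strictMono_of_injective fun i j hij => ?_⟩
  exact σ.injective (e.injective (Subtype.ext (hg (e (σ i)).2 (e (σ j)).2 hij)))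

theorem sum_abs_sub_of_monotone {R : Type*} [AddCommGroup R] [LinearOrder R] [IsOrderedAddMonoid R]
    {n : ℕ} {f : Fin (n + 1) → R} (hf : Monotone f) :
    ∑ i : Fin n, |f i.castSucc - f i.succ| = |f 0 - f (Fin.last n)| := by
  have abs_step (i : Fin n) : |f i.castSucc - f i.succ| = f i.succ - f i.castSucc := by
    rw [abs_sub_comm, abs_of_nonneg (sub_nonneg.2 (hf i.castSucc_lt_succ.le))]
  rw [Finset.sum_congr rfl fun i _ => abs_step i, Finset.sum_sub_distrib, abs_sub_comm,
    abs_of_nonneg (sub_nonneg.2 (hf (Fin.zero_le _))), sub_eq_sub_iff_add_eq_add,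
    add_comm, ← Fin.sum_univ_succ, Fin.sum_univ_castSucc, add_comm]

theorem sum_abs_sub_of_antitone {R : Type*} [AddCommGroup R] [LinearOrder R] [IsOrderedAddMonoid R]
    {n : ℕ} {f : Fin (n + 1) → R} (hf : Antitone f) :
    ∑ i : Fin n, |f i.castSucc - f i.succ| = |f 0 - f (Fin.last n)| := by
  simpa only [Pi.neg_apply, neg_sub_neg, abs_sub_comm] using sum_abs_sub_of_monotone hf.neg

/-- The planar points `u 0, u 1, …` turn strictly clockwise: the two coordinate differences along
any three of them, taken in order, have negative determinant. -/
def TurnsClockwise {R : Type*} [Ring R] [LT R] {n : ℕ} (u : Fin n → Fin 2 → R) : Prop :=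
  ∀ i j k, i < j → j < k →
    (u j 0 - u i 0) * (u k 1 - u j 1) < (u j 1 - u i 1) * (u k 0 - u j 0)

theorem TurnsClockwise.injective_steps {R : Type*} [CommRing R] [LinearOrder R]
    [IsStrictOrderedRing R] {n : ℕ} {u : Fin (n + 1) → Fin 2 → R} (hu : TurnsClockwise u) :
    Function.Injective fun i : Fin n => u i.castSucc - u i.succ := by
  refine Function.Injective.of_lt_imp_ne fun i j hij hstep => ?_
  have step_zero := congrFun hstep 0
  have step_one := congrFun hstep 1
  simp only [Pi.sub_apply] at step_zero step_one
  rcases (Fin.succ_le_castSucc_iff.2 hij).eq_or_lt with consecutive | gap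
  · have turn := hu _ _ _ i.castSucc_lt_succ (consecutive ▸ j.castSucc_lt_succ)
    rw [consecutive] at turn step_zero step_one
    refine lt_irrefl (0 : R) ?_
    linear_combination turn - (u j.castSucc 1 - u j.succ 1) * step_zero
      + (u j.castSucc 0 - u j.succ 0) * step_one
  · -- The gap between the two equal steps would have to lie strictly on both sides of the step.
    have first_turn := hu _ _ _ i.castSucc_lt_succ gap
    have second_turn := hu _ _ _ gap j.castSucc_lt_succ
    refine lt_irrefl (0 : R) ?_
    linear_combination first_turn + second_turn - (u i.succ 1 - u j.castSucc 1) * step_zero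
      + (u i.succ 0 - u j.castSucc 0) * step_one

theorem natCast_le_of_turnsClockwise {n : ℕ} {u : Fin (n + 1) → Fin 2 → ℤ}
    (hu : TurnsClockwise u) (u_zero_mono : Monotone fun i => u i 0)
    (u_one_anti : Antitone fun i => u i 1) {M : ℝ} (hM : 1 ≤ M)
    (hdist : ((∑ k, |u 0 k - u (Fin.last n) k| : ℤ) : ℝ) ≤ M) :
    (n : ℝ) ≤ 26 * M ^ ((2 : ℝ) / 3) := by
  classical
  set steps := Finset.univ.image fun i : Fin n => u i.castSucc - u i.succ with steps_def
  have card_steps : steps.card = n := by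
    rw [Finset.card_image_of_injective _ hu.injective_steps, Finset.card_univ, Fintype.card_fin]
  have sum_steps : ∑ d ∈ steps, ∑ k, |d k| = ∑ k, |u 0 k - u (Fin.last n) k| := by
    rw [steps_def, Finset.sum_image hu.injective_steps.injOn, Finset.sum_comm]
    simp only [Pi.sub_apply, Fin.sum_univ_two]
    rw [sum_abs_sub_of_monotone u_zero_mono, sum_abs_sub_of_antitone u_one_anti]
  have bound := card_le_mul_rpow_of_sum_abs_le steps hM (by rwa [sum_steps])
  rw [card_steps, Fintype.card_fin] at bound
  norm_num at bound
  exact bound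

end Sequences

section StrictMaximizers

/-- `v` is the only maximiser of `f` on `s`, up to whether `v` itself lies in `s`. This expresses
that `f` exposes the vertex `v` of a polygon with vertex set `s`. -/
def IsStrictMaxOn {α β : Type*} [LT β] (f : α → β) (s : Set α) (v : α) : Prop :=
  ∀ w ∈ s, w ≠ v → f w < f v

theorem IsStrictMaxOn.mono {α β : Type*} [LT β] {f : α → β} {s t : Set α} {v : α}
    (h : IsStrictMaxOn f t v) (hst : s ⊆ t) : IsStrictMaxOn f s v := fun w hw =>
  h w (hst hw)

theorem isAntichain_of_isStrictMaxOn {α β : Type*} [Preorder α] [Preorder β] {s : Set α}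
    (hs : ∀ v ∈ s, ∃ f : α → β, Monotone f ∧ IsStrictMaxOn f s v) : IsAntichain (· ≤ ·) s := by
  intro v hv w hw hne hle
  obtain ⟨f, f_mono, f_max⟩ := hs v hv
  exact (f_mono hle).not_gt (f_max w hw hne.symm)

theorem injOn_apply_zero_of_isAntichain {β : Type*} [LinearOrder β] {s : Set (Fin 2 → β)}
    (hs : IsAntichain (· ≤ ·) s) : InjOn (fun v => v 0) s := by
  intro v hv w hw hvw
  rcases le_total (v 1) (w 1) with h | h
  · exact hs.eq hv hw (Fin.forall_fin_two.2 ⟨hvw.le, h⟩)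
  · exact (hs.eq hw hv (Fin.forall_fin_two.2 ⟨hvw.ge, h⟩)).symm

theorem apply_one_lt_of_isAntichain {β : Type*} [LinearOrder β] {s : Set (Fin 2 → β)}
    (hs : IsAntichain (· ≤ ·) s) {v w : Fin 2 → β} (hv : v ∈ s) (hw : w ∈ s) (h : v 0 < w 0) :
    w 1 < v 1 := by
  by_contra! hle
  have hne : v ≠ w := fun heq => h.ne (congrFun heq 0)
  exact hs hv hw hne (Fin.forall_fin_two.2 ⟨h.le, hle⟩)

theorem det_neg_of_monotone {f : (Fin 2 → ℤ) →+ ℝ} (f_mono : Monotone f) {d e : Fin 2 → ℤ}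
    (hd : 0 < f d) (he : f e < 0) (d_pos : 0 < d 0) (e_pos : 0 < e 0) :
    d 0 * e 1 < d 1 * e 0 := by
  have f_eq (v : Fin 2 → ℤ) : f v = v 0 * f (Pi.single 0 1) + v 1 * f (Pi.single 1 1) := by
    rw [← zsmul_eq_mul, ← zsmul_eq_mul, ← map_zsmul, ← map_zsmul, ← map_add]
    congr 1
    ext i
    fin_cases i <;> simp
  have coeff_nonneg (i : Fin 2) : 0 ≤ f (Pi.single i 1) := by
    simpa using f_mono (Pi.single_nonneg.2 (zero_le_one' ℤ) : 0 ≤ (Pi.single i 1 : Fin 2 → ℤ))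
  have d_pos' : (0 : ℝ) < d 0 := by exact_mod_cast d_pos
  have e_pos' : (0 : ℝ) < e 0 := by exact_mod_cast e_pos
  -- The determinant times the second coefficient of `f` is `d 0 * f e - e 0 * f d`.
  have scaled_det_neg :
      f (Pi.single 1 1) * (d 0 * e 1) < f (Pi.single 1 1) * (d 1 * e 0) := by
    linear_combination mul_pos e_pos' hd + mul_neg_of_pos_of_neg d_pos' he + e 0 * f_eq d
      - d 0 * f_eq e
  exact_mod_cast lt_of_mul_lt_mul_left scaled_det_neg (coeff_nonneg 1)

theorem turnsClockwise_of_isStrictMaxOn {n : ℕ} {u : Fin n → Fin 2 → ℤ}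
    (u_zero_mono : StrictMono fun i => u i 0)
    (hu : ∀ j, ∃ f : (Fin 2 → ℤ) →+ ℝ, Monotone f ∧ IsStrictMaxOn f (range u) (u j)) :
    TurnsClockwise u := by
  intro i j k hij hjk
  obtain ⟨f, f_mono, f_max⟩ := hu j
  have u_inj : Function.Injective u := fun _ _ h => u_zero_mono.injective (congrFun h 0)
  refine det_neg_of_monotone (d := u j - u i) (e := u k - u j) f_mono ?_ ?_
    (sub_pos.2 (u_zero_mono hij)) (sub_pos.2 (u_zero_mono hjk))
  · rw [map_sub, sub_pos]
    exact f_max _ (mem_range_self i) (u_inj.ne hij.ne)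
  · rw [map_sub, sub_neg]
    exact f_max _ (mem_range_self k) (u_inj.ne hjk.ne')

theorem card_le_of_monotone_isStrictMaxOn {Q : Finset (Fin 2 → ℤ)} {M : ℝ} (hM : 1 ≤ M)
    (hdist : ∀ v ∈ Q, ∀ w ∈ Q, ((∑ i, |v i - w i| : ℤ) : ℝ) ≤ M)
    (hQ : ∀ v ∈ Q, ∃ f : (Fin 2 → ℤ) →+ ℝ, Monotone f ∧ IsStrictMaxOn f Q v) :
    (Q.card : ℝ) ≤ 27 * M ^ ((2 : ℝ) / 3) := by
  have antichain : IsAntichain (· ≤ ·) (Q : Set (Fin 2 → ℤ)) :=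
    isAntichain_of_isStrictMaxOn fun v hv =>
      let ⟨f, hf⟩ := hQ v hv
      ⟨f, hf⟩
  have one_le_rpow : 1 ≤ M ^ ((2 : ℝ) / 3) := Real.one_le_rpow hM (by norm_num)
  rcases hcard : Q.card with _ | n
  · rw [Nat.cast_zero]
    positivity
  obtain ⟨u, u_mem, u_zero_mono⟩ :=
    exists_fin_enum_strictMono (injOn_apply_zero_of_isAntichain antichain) hcard
  have u_one_anti : Antitone fun i => u i 1 := StrictAnti.antitone fun i j hij =>
    apply_one_lt_of_isAntichain antichain (u_mem i) (u_mem j) (u_zero_mono hij)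
  have turns : TurnsClockwise u := by
    refine turnsClockwise_of_isStrictMaxOn u_zero_mono fun j => ?_
    obtain ⟨f, f_mono, f_max⟩ := hQ _ (u_mem j)
    exact ⟨f, f_mono, f_max.mono (range_subset_iff.2 u_mem)⟩
  have n_le := natCast_le_of_turnsClockwise turns u_zero_mono.monotone u_one_anti hM
    (hdist _ (u_mem 0) _ (u_mem (Fin.last n)))
  push_cast
  linarith

theorem card_le_of_units_smul_monotone_isStrictMaxOn {Q : Finset (Fin 2 → ℤ)} {M : ℝ} (hM : 1 ≤ M)
    (hdist : ∀ v ∈ Q, ∀ w ∈ Q, ((∑ i, |v i - w i| : ℤ) : ℝ) ≤ M) (ε : Fin 2 → ℤˣ)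
    (hQ : ∀ v ∈ Q, ∃ f : (Fin 2 → ℤ) →+ ℝ,
      Monotone (fun w => f (ε • w)) ∧ IsStrictMaxOn f Q v) :
    (Q.card : ℝ) ≤ 27 * M ^ ((2 : ℝ) / 3) := by
  rw [← Finset.card_image_of_injective Q (MulAction.injective ε⁻¹)]
  refine card_le_of_monotone_isStrictMaxOn hM ?_ ?_ <;> simp only [Finset.forall_mem_image]
  · intro v hv w hw
    simpa only [← Pi.sub_apply, ← smul_sub, abs_units_smul_apply] using hdist v hv w hw
  · intro v hv
    obtain ⟨f, f_mono, f_max⟩ := hQ v hv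
    refine ⟨f.comp (DistribSMul.toAddMonoidHom (Fin 2 → ℤ) ε), f_mono, ?_⟩
    rw [IsStrictMaxOn, Finset.coe_image, forall_mem_image]
    intro w hw hne
    simpa using f_max w hw (ne_of_apply_ne _ hne)

theorem card_le_of_isStrictMaxOn {P : Finset (Fin 2 → ℤ)} {M : ℝ} (hM : 1 ≤ M)
    (hdist : ∀ v ∈ P, ∀ w ∈ P, ((∑ i, |v i - w i| : ℤ) : ℝ) ≤ M)
    (hP : ∀ v ∈ P, ∃ f : (Fin 2 → ℤ) →+ ℝ, IsStrictMaxOn f P v) :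
    (P.card : ℝ) ≤ 108 * M ^ ((2 : ℝ) / 3) := by
  choose! f f_max using hP
  choose ε ε_mono using fun v => exists_monotone_units_smul (f v)
  have fiber_le (η : Fin 2 → ℤˣ) :
      ((P.filter fun v => ε v = η).card : ℝ) ≤ 27 * M ^ ((2 : ℝ) / 3) := by
    refine card_le_of_units_smul_monotone_isStrictMaxOn hM (fun v hv w hw => ?_) η fun v hv => ?_
    · exact hdist v (Finset.mem_filter.1 hv).1 w (Finset.mem_filter.1 hw).1
    · obtain ⟨hvP, rfl⟩ := Finset.mem_filter.1 hv
      exact ⟨f v, ε_mono v, (f_max v hvP).mono (Finset.filter_subset _ P)⟩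
  calc (P.card : ℝ) = ∑ η : Fin 2 → ℤˣ, ((P.filter fun v => ε v = η).card : ℝ) := by
        exact_mod_cast Finset.card_eq_sum_card_fiberwise fun v _ => Finset.mem_univ (ε v)
    _ ≤ ∑ _η : Fin 2 → ℤˣ, 27 * M ^ ((2 : ℝ) / 3) := Finset.sum_le_sum fun η _ => fiber_le η
    _ = 108 * M ^ ((2 : ℝ) / 3) := by
        simp only [Finset.sum_const, Finset.card_univ, Fintype.card_fun, Fintype.card_fin,
          Fintype.card_units_int, nsmul_eq_mul]
        push_cast
        ring

end StrictMaximizers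

section ConvexHulls

theorem exists_isStrictMaxOn_of_mem_extremePoints {E : Type*} [AddCommGroup E] [Module ℝ E]
    [TopologicalSpace E] [IsTopologicalAddGroup E] [ContinuousSMul ℝ E] [LocallyConvexSpace ℝ E]
    [T2Space E] {s : Set E} (hs : s.Finite) {x : E} (hx : x ∈ (convexHull ℝ s).extremePoints ℝ) :
    ∃ f : StrongDual ℝ E, IsStrictMaxOn f s x := by
  have notMem : x ∉ convexHull ℝ (s \ {x}) := fun h =>
    ((convex_convexHull ℝ s).mem_extremePoints_iff_mem_sdiff_convexHull_sdiff.1 hx).2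
      (convexHull_mono (sdiff_subset_sdiff_left (subset_convexHull ℝ s)) h)
  obtain ⟨f, c, f_lt, lt_f⟩ := geometric_hahn_banach_closed_point (convex_convexHull ℝ _)
    (hs.sdiff.isClosed_convexHull ℝ) notMem
  exact ⟨f, fun y hy hne => (f_lt y (subset_convexHull ℝ _ ⟨hy, hne⟩)).trans lt_f⟩

variable {E : Type*} [NormedAddCommGroup E] [NormedSpace ℝ E]

theorem nontrivial_of_nonempty_interior_convexHull [Nontrivial E] {s : Set E}
    (hs : (interior (convexHull ℝ s)).Nonempty) : s.Nontrivial := by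
  by_contra h
  rw [not_nontrivial_iff] at h
  rw [h.convex.convexHull_eq] at hs
  obtain ⟨x, hx⟩ := hs
  have : (nhdsWithin x {x}ᶜ).NeBot := Module.punctured_nhds_neBot ℝ E x
  exact infinite_of_mem_nhds x (mem_interior_iff_mem_nhds.1 hx) h.finite

theorem sum_smul_mem_interior_convexHull {ι : Type*} [Fintype ι] (b : AffineBasis ι ℝ E)
    {w : ι → ℝ} (w_pos : ∀ i, 0 < w i) (w_sum : ∑ i, w i = 1) :
    ∑ i, w i • b i ∈ interior (convexHull ℝ (range b)) := by
  rw [b.interior_convexHull]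
  intro i
  rw [← Finset.affineCombination_eq_linear_combination _ _ _ w_sum,
    b.coord_apply_combination_of_mem (Finset.mem_univ i) w_sum]
  exact w_pos i

theorem exists_card_le_finrank_of_mem_convexHull_of_notMem_interior [FiniteDimensional ℝ E]
    {s : Set E} {x : E} (hx : x ∈ convexHull ℝ s) (hx' : x ∉ interior (convexHull ℝ s)) :
    ∃ t : Finset E, ↑t ⊆ s ∧ t.card ≤ Module.finrank ℝ E ∧ x ∈ convexHull ℝ (t : Set E) := by
  classical
  obtain ⟨ι, _, z, w, z_mem, z_indep, w_pos, w_sum, rfl⟩ := eq_pos_convex_span_of_mem_convexHull hx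
  have card_ne : Fintype.card ι ≠ Module.finrank ℝ E + 1 := fun hcard => by
    let b : AffineBasis ι ℝ E :=
      ⟨z, z_indep, z_indep.affineSpan_eq_top_iff_card_eq_finrank_add_one.2 hcard⟩
    exact hx' (interior_mono (convexHull_mono z_mem)
      (sum_smul_mem_interior_convexHull b w_pos w_sum))
  have card_le : Fintype.card ι ≤ Module.finrank ℝ E + 1 :=
    z_indep.card_le_finrank_succ.trans (Nat.succ_le_succ (Submodule.finrank_le _))
  refine ⟨Finset.univ.image z, by simpa using z_mem, ?_, ?_⟩
  · exact Finset.card_image_le.trans (Nat.le_of_lt_succ (card_le.lt_of_ne card_ne))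
  · exact (convex_convexHull ℝ _).sum_mem (fun i _ => (w_pos i).le) w_sum fun i _ =>
      subset_convexHull ℝ _ (by simp)

theorem image_subset_image_frontier {F : Type*} [AddCommGroup F] [Module ℝ F] {f : E →ₗ[ℝ] F}
    (hf : f.ker ≠ ⊥) {s : Set E} (hs : Bornology.IsBounded s) : f '' s ⊆ f '' frontier s := by
  rintro _ ⟨z, hz, rfl⟩
  obtain ⟨e, f_e, e_ne⟩ := Submodule.exists_mem_ne_zero_of_ne_bot hf
  -- The line through `z` in a direction of the kernel leaves `s`, so it crosses the frontier.
  let line : ℝ →ᵃ[ℝ] E := AffineMap.lineMap z (z + e)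
  have exits : line ⁻¹' s ≠ univ := fun h => by
    have line_antilipschitz :=
      antilipschitzWith_lineMap (𝕜 := ℝ) (left_ne_add.2 e_ne : z ≠ z + e)
    exact NormedSpace.unbounded_univ ℝ ℝ (h ▸ line_antilipschitz.isBounded_preimage hs)
  obtain ⟨c, hc⟩ := nonempty_frontier_iff.2 ⟨⟨0, by simpa [line] using hz⟩, exits⟩
  refine ⟨line c, AffineMap.lineMap_continuous.frontier_preimage_subset s hc, ?_⟩
  simp [line, AffineMap.lineMap_apply, LinearMap.mem_ker.1 f_e]

variable [MeasurableSpace E] [BorelSpace E]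

theorem hausdorffMeasure_one_convexHull_lt_top {t : Finset E} (ht : t.card ≤ 2) :
    μH[1] (convexHull ℝ (t : Set E)) < ⊤ := by
  classical
  rcases ht.lt_or_eq with h | h
  · have := Measure.nullSingletonClass_hausdorff E zero_lt_one
    have t_subsingleton : (t : Set E).Subsingleton :=
      Finset.card_le_one_iff_subsingleton.1 (Nat.le_of_lt_succ h)
    rw [t_subsingleton.convex.convexHull_eq, t_subsingleton.measure_zero]
    exact ENNReal.zero_lt_top
  · obtain ⟨p, q, -, rfl⟩ := Finset.card_eq_two.1 h
    rw [Finset.coe_pair, convexHull_pair, hausdorffMeasure_segment]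
    exact edist_lt_top p q

theorem hausdorffMeasure_one_frontier_convexHull_ne_top (hE : Module.finrank ℝ E = 2)
    {s : Set E} (hs : s.Finite) : μH[1] (frontier (convexHull ℝ s)) ≠ ⊤ := by
  have : FiniteDimensional ℝ E := Module.finite_of_finrank_eq_succ hE
  have cover : frontier (convexHull ℝ s) ⊆
      ⋃ t ∈ {t : Finset E | ↑t ⊆ s ∧ t.card ≤ 2}, convexHull ℝ (t : Set E) := by
    intro x hx
    rw [(hs.isClosed_convexHull ℝ).frontier_eq] at hx
    obtain ⟨t, ht, ht_card, hxt⟩ :=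
      exists_card_le_finrank_of_mem_convexHull_of_notMem_interior hx.1 hx.2
    exact mem_biUnion ⟨ht, hE ▸ ht_card⟩ hxt
  refine ((measure_mono cover).trans_lt (measure_biUnion_lt_top ?_ fun t ht => ?_)).ne
  · exact (hs.finite_subsets.preimage Finset.coe_injective.injOn).subset fun t ht => ht.1
  · exact hausdorffMeasure_one_convexHull_lt_top ht.2

theorem edist_le_hausdorffMeasure_frontier (hE : 1 < Module.rank ℝ E) {s : Set E}
    (hs : IsPreconnected s) (hs' : Bornology.IsBounded s) {p q : E} (hp : p ∈ s) (hq : q ∈ s) :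
    edist p q ≤ μH[1] (frontier s) := by
  obtain ⟨f, f_norm, f_eq⟩ := exists_dual_vector'' ℝ (q - p)
  have f_lipschitz : LipschitzWith 1 f := f.lipschitz.weaken f_norm
  have f_ker : (f : E →ₗ[ℝ] ℝ).ker ≠ ⊥ := fun h => by
    have := LinearMap.lift_rank_le_of_injective _ (LinearMap.ker_eq_bot.1 h)
    rw [Module.rank_self, Cardinal.lift_one, Cardinal.lift_le_one_iff] at this
    exact hE.not_ge this
  have icc_subset : Icc (f p) (f q) ⊆ f '' frontier s :=
    (hs.intermediate_value hp hq f.continuous.continuousOn).trans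
      (image_subset_image_frontier f_ker hs')
  calc edist p q = μH[1] (Icc (f p) (f q)) := by
        rw [hausdorffMeasure_real, Real.volume_Icc, ← map_sub, f_eq, edist_comm, edist_dist,
          dist_eq_norm, RCLike.ofReal_real_eq_id, id]
    _ ≤ μH[1] (f '' frontier s) := measure_mono icc_subset
    _ ≤ μH[1] (frontier s) := by
        simpa using f_lipschitz.hausdorffMeasure_image_le zero_le_one (frontier s)

theorem dist_le_hausdorffMeasure_frontier_convexHull (hE : Module.finrank ℝ E = 2) {s : Set E}
    (hs : s.Finite) {p q : E} (hp : p ∈ convexHull ℝ s) (hq : q ∈ convexHull ℝ s) :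
    dist p q ≤ (μH[1] (frontier (convexHull ℝ s))).toReal := by
  have one_lt_rank : 1 < Module.rank ℝ E := Module.one_lt_rank_of_one_lt_finrank (hE ▸ one_lt_two)
  rw [dist_edist]
  exact ENNReal.toReal_mono (hausdorffMeasure_one_frontier_convexHull_ne_top hE hs)
    (edist_le_hausdorffMeasure_frontier one_lt_rank (convex_convexHull ℝ s).isPreconnected
      (isBounded_convexHull.2 hs.isBounded) hp hq)

end ConvexHulls

section LatticePolygons

theorem ek_add (v w : Fin 2 → ℤ) : ek (v + w) = ek v + ek w := by
  ext i
  simp [ek]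

theorem abs_sub_le_dist_ek (v w : Fin 2 → ℤ) (i : Fin 2) :
    |(v i : ℝ) - w i| ≤ dist (ek v) (ek w) := by
  rw [dist_eq_norm]
  exact PiLp.norm_apply_le (ek v - ek w) i

theorem sum_abs_sub_le_two_mul_dist_ek (v w : Fin 2 → ℤ) :
    ((∑ i, |v i - w i| : ℤ) : ℝ) ≤ 2 * dist (ek v) (ek w) := by
  push_cast
  simpa using Finset.sum_le_card_nsmul Finset.univ _ _ fun i _ => abs_sub_le_dist_ek v w i

theorem one_le_dist_ek {v w : Fin 2 → ℤ} (h : v ≠ w) : 1 ≤ dist (ek v) (ek w) := by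
  obtain ⟨i, hi⟩ := Function.ne_iff.1 h
  have one_le : 1 ≤ |v i - w i| := Int.one_le_abs (sub_ne_zero.2 hi)
  exact le_trans (by exact_mod_cast one_le) (abs_sub_le_dist_ek v w i)

theorem ek_injective : Function.Injective ek := fun v w h => by
  by_contra hne
  exact (one_le_dist_ek hne).not_gt (h ▸ dist_self (ek v) ▸ zero_lt_one)

theorem exists_isStrictMaxOn_of_ek_mem_extremePoints {s : Set (Fin 2 → ℤ)} (hs : s.Finite)
    {v : Fin 2 → ℤ} (hv : ek v ∈ (convexHull ℝ (ek '' s)).extremePoints ℝ) :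
    ∃ f : (Fin 2 → ℤ) →+ ℝ, IsStrictMaxOn f s v := by
  obtain ⟨f, f_max⟩ := exists_isStrictMaxOn_of_mem_extremePoints (hs.image ek) hv
  exact ⟨AddMonoidHom.mk' (fun w => f (ek w)) fun u w => by rw [ek_add, map_add],
    fun w hw hne => f_max (ek w) (mem_image_of_mem ek hw) (ek_injective.ne hne)⟩

theorem dist_ek_le_hausdorffMeasure_frontier_convexHull {s : Set (Fin 2 → ℤ)} (hs : s.Finite)
    {v w : Fin 2 → ℤ} (hv : v ∈ s) (hw : w ∈ s) :
    dist (ek v) (ek w) ≤ (μH[1] (frontier (convexHull ℝ (ek '' s)))).toReal :=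
  dist_le_hausdorffMeasure_frontier_convexHull finrank_euclideanSpace_fin (hs.image ek)
    (subset_convexHull ℝ _ (mem_image_of_mem ek hv))
    (subset_convexHull ℝ _ (mem_image_of_mem ek hw))

theorem one_le_hausdorffMeasure_frontier_convexHull_ek {s : Set (Fin 2 → ℤ)} (hs : s.Finite)
    (hs' : s.Nontrivial) : 1 ≤ (μH[1] (frontier (convexHull ℝ (ek '' s)))).toReal := by
  obtain ⟨v, hv, w, hw, hne⟩ := hs'
  exact (one_le_dist_ek hne).trans (dist_ek_le_hausdorffMeasure_frontier_convexHull hs hv hw)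

end LatticePolygons

/-- a result of Andrews: there is an absolute constant `C` such that every
convex polygon in the plane whose vertices are lattice points and whose perimeter is `L`
has at most `C L^{2/3}` vertices.  A convex polygon is the boundary of a compact
two-dimensional convex polytope `K` (the convex hull of a finite set of lattice points with
nonempty interior); its vertices are the extreme points of `K`, and its perimeter is the
one-dimensional Hausdorff measure of `frontier K`. -/
theorem statement13 :
    ∃ C : ℝ, 0 < C ∧ ∀ V : Finset (Fin 2 → ℤ), ∀ K : Set E2,
      K = convexHull ℝ (ek '' ↑V) → (interior K).Nonempty →
      (Nat.card (Set.extremePoints ℝ K) : ℝ) ≤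
        C * (μH[1] (frontier K)).toReal ^ ((2 : ℝ) / 3) := by
  refine ⟨108 * 2 ^ ((2 : ℝ) / 3), by positivity, ?_⟩
  rintro V K rfl hK
  obtain ⟨P, P_subset, P_eq⟩ := subset_image_iff.1
    (extremePoints_convexHull_subset (𝕜 := ℝ) (A := ek '' (V : Set (Fin 2 → ℤ))))
  lift P to Finset (Fin 2 → ℤ) using V.finite_toSet.subset P_subset
  have one_le_L := one_le_hausdorffMeasure_frontier_convexHull_ek V.finite_toSet
    (nontrivial_of_image ek _ (nontrivial_of_nonempty_interior_convexHull hK))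
  rw [← P_eq, Nat.card_image_of_injective ek_injective, SetLike.coe_sort_coe,
    Nat.card_eq_finsetCard, mul_assoc, ← Real.mul_rpow zero_le_two ENNReal.toReal_nonneg]
  refine card_le_of_isStrictMaxOn (by linarith) (fun v hv w hw => ?_) fun v hv => ?_
  · linarith [sum_abs_sub_le_two_mul_dist_ek v w,
      dist_ek_le_hausdorffMeasure_frontier_convexHull V.finite_toSet (P_subset hv) (P_subset hw)]
  · obtain ⟨f, f_max⟩ := exists_isStrictMaxOn_of_ek_mem_extremePoints V.finite_toSet
      (P_eq ▸ mem_image_of_mem ek hv)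
    exact ⟨f, f_max.mono P_subset⟩

end
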